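/- arXiv:2002.02919 — 2 statements merged into one kernel-verified Lean document; each statement's English description precedes it below -/
import Mathlib

section
/- Let W, B, V, p, ε, η, σ, q be nonnegative real numbers with qε ≤ 1. Then [(1−qε)W + B + εη√p + εη(W + √V)]² + ε²σ²p + ε²σ²(W + √V)² ≤ [(1 − qε + ηε + √2·σε)W + B + εη(√p + √V)]² + ε²σ²(p + 2V). (This is the chain of inequalities established in the proof of Lemma S2, combining the regrouping of the η-terms, the bound (W+√V)² ≤ 2W² + 2V, and the absorption of the term 2ε²σ²W² into the square via the cross term.) -/
/-!
The two brackets differ exactly by `s = √2 σ ε W ≥ 0`. With `A ≥ 0` the left-hand bracket,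
`(A + s)² ≥ A² + s² = A² + 2 ε² σ² W²`, which together with `(W + √V)² ≤ 2 W² + 2 V`
gives the claim. The assumption `q ε ≤ 1` is what makes `A` nonnegative.
-/

/-- The chain of inequalities from the proof of Lemma S2. -/
theorem stmt_4 (W B V p ε η σ q : ℝ)
    (hW : 0 ≤ W) (hB : 0 ≤ B) (hV : 0 ≤ V) (hp : 0 ≤ p) (hε : 0 ≤ ε)
    (hη : 0 ≤ η) (hσ : 0 ≤ σ) (hq : 0 ≤ q) (hqε : q * ε ≤ 1) :
    ((1 - q * ε) * W + B + ε * η * Real.sqrt p + ε * η * (W + Real.sqrt V)) ^ 2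
        + ε ^ 2 * σ ^ 2 * p + ε ^ 2 * σ ^ 2 * (W + Real.sqrt V) ^ 2 ≤
      ((1 - q * ε + η * ε + Real.sqrt 2 * σ * ε) * W + B
          + ε * η * (Real.sqrt p + Real.sqrt V)) ^ 2
        + ε ^ 2 * σ ^ 2 * (p + 2 * V) := by
  have h1 : 0 ≤ 1 - q * ε := by linarith
  have hA : 0 ≤ (1 - q * ε) * W + B + ε * η * Real.sqrt p + ε * η * (W + Real.sqrt V) := by
    positivity
  have hs : 0 ≤ Real.sqrt 2 * σ * ε * W := by positivity
  have hs2 : (Real.sqrt 2 * σ * ε * W) ^ 2 = 2 * (ε ^ 2 * σ ^ 2 * W ^ 2) := by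
    have h2 : Real.sqrt 2 ^ 2 = 2 := Real.sq_sqrt (by norm_num)
    linear_combination (σ * ε * W) ^ 2 * h2
  have hWV : ε ^ 2 * σ ^ 2 * (W + Real.sqrt V) ^ 2 ≤ ε ^ 2 * σ ^ 2 * (2 * W ^ 2 + 2 * V) := by
    apply mul_le_mul_of_nonneg_left _ (by positivity)
    nlinarith [sq_nonneg (W - Real.sqrt V), Real.sq_sqrt hV]
  have hR : (1 - q * ε + η * ε + Real.sqrt 2 * σ * ε) * W + B
        + ε * η * (Real.sqrt p + Real.sqrt V)
      = ((1 - q * ε) * W + B + ε * η * Real.sqrt p + ε * η * (W + Real.sqrt V))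
        + Real.sqrt 2 * σ * ε * W := by ring
  rw [hR, add_sq _ (Real.sqrt 2 * σ * ε * W), hs2]
  linarith [mul_nonneg hA hs]
end

section
/- Let α ∈ (0,1), C ≥ 0, D ≥ 0, and let (x_k)_{k≥0} be a sequence of nonnegative real numbers satisfying the recursive inequality x_{k+1}² ≤ [(1−α)x_k + C]² + D² for all k ≥ 0. Then for every K ≥ 0, x_K ≤ (1−α)^K·x_0 + C/α + D²/(C + √α·D). (This is the recursion-resolution lemma, Lemma 1 of Dalalyan and Karagulyan, invoked at the end of the proof of Lemma S2 to convert the one-step Wasserstein recursion into the explicit convergence bound of Lemma S2; when D = 0 or C = 0 the last term is interpreted as 0 or D/√α respectively.) -/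
/-!
Put `E = C / α` and `F = D² / (C + √α D)`, so the claim is `x K ≤ (1-α)^K x₀ + E + F`; it is proved
by induction on `K`. Since `(1-α) E + C = E`, inserting the bound for `x k` in the recursion gives
`x (k+1)² ≤ (z + (1-α) F)² + D²` with `z = (1-α)^(k+1) x₀ + E ≥ E`, and this is at most `(z + F)²`
as soon as `D² ≤ α F (2 z + (2-α) F)`. As `α z ≥ C` and `α ≤ 1`, it suffices that
`D² ≤ 2 C F + α F²`, which is `recursion_gap`.
-/

/-- With `S = C + √α D`, multiplying by `S²` turns this into
`D² S² ≤ D² (2 C S + α D²)`, where the bracket equals `S² + C²`. -/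
lemma recursion_gap {α C D : ℝ} (hα0 : 0 < α) (hC : 0 ≤ C) (hD : 0 ≤ D) :
    D ^ 2 ≤ 2 * C * (D ^ 2 / (C + Real.sqrt α * D))
      + α * (D ^ 2 / (C + Real.sqrt α * D)) ^ 2 := by
  have hs : 0 < Real.sqrt α := Real.sqrt_pos.mpr hα0
  have hs2 : Real.sqrt α ^ 2 = α := Real.sq_sqrt hα0.le
  rcases hD.eq_or_lt with rfl | hDpos
  · simp
  · have hS : 0 < C + Real.sqrt α * D := by positivity
    have key : 2 * C * (D ^ 2 / (C + Real.sqrt α * D))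
        + α * (D ^ 2 / (C + Real.sqrt α * D)) ^ 2 - D ^ 2
        = D ^ 2 * C ^ 2 / (C + Real.sqrt α * D) ^ 2 := by
      nth_rewrite 2 [← hs2]
      field_simp
      ring
    have : 0 ≤ D ^ 2 * C ^ 2 / (C + Real.sqrt α * D) ^ 2 := by positivity
    linarith

/-- Recursion-resolution lemma (Lemma 1 of Dalalyan and Karagulyan): if
`x_{k+1}² ≤ [(1−α)x_k + C]² + D²` for all `k`, with `α ∈ (0,1)`, `C, D ≥ 0` and `x_k ≥ 0`,
then `x_K ≤ (1−α)^K x_0 + C/α + D²/(C + √α·D)` for every `K`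
(the last term interpreted as 0 when `C = D = 0`). -/
theorem stmt_14 (α C D : ℝ) (x : ℕ → ℝ)
    (hα0 : 0 < α) (hα1 : α < 1) (hC : 0 ≤ C) (hD : 0 ≤ D) (hx : ∀ k, 0 ≤ x k)
    (hrec : ∀ k, (x (k + 1)) ^ 2 ≤ ((1 - α) * x k + C) ^ 2 + D ^ 2) :
    ∀ K, x K ≤ (1 - α) ^ K * x 0 + C / α + D ^ 2 / (C + Real.sqrt α * D) := by
  have hgap := recursion_gap hα0 hC hD
  have hF : 0 ≤ D ^ 2 / (C + Real.sqrt α * D) := by positivity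
  generalize D ^ 2 / (C + Real.sqrt α * D) = F at hgap hF ⊢
  have hE : 0 ≤ C / α := by positivity
  have hCE : C = α * (C / α) := by field_simp
  generalize C / α = E at hE hCE ⊢
  have h1α : 0 ≤ 1 - α := by linarith
  intro K
  induction K with
  | zero => simp only [pow_zero, one_mul]; linarith
  | succ k ih =>
    have hw : 0 ≤ (1 - α) ^ (k + 1) * x 0 := mul_nonneg (pow_nonneg h1α _) (hx 0)
    have hstep : (1 - α) * x k + C ≤ (1 - α) ^ (k + 1) * x 0 + E + (1 - α) * F := by
      have h := mul_le_mul_of_nonneg_left ih h1α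
      rw [pow_succ]
      linarith
    generalize (1 - α) ^ (k + 1) * x 0 = w at hw hstep ⊢
    have hsq : ((1 - α) * x k + C) ^ 2 ≤ (w + E + (1 - α) * F) ^ 2 :=
      pow_le_pow_left₀ (add_nonneg (mul_nonneg h1α (hx k)) hC) hstep 2
    refine abs_le_of_sq_le_sq' ?_ (by positivity) |>.2
    have hwF : 0 ≤ α * F * w := by positivity
    have hFF : 0 ≤ α * (1 - α) * F ^ 2 := by positivity
    have hCF : C * F = α * E * F := by rw [← hCE]
    linarith [hrec k]
end
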